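/- Let P be a joint distribution on 𝒳 × 𝒴 × 𝒵 and define Q₀ : 𝒳 × 𝒴 × 𝒵 → ℝ by Q₀(x,y,z) = P(X=x,Y=y)·P(X=x,Z=z)/P(X=x) if P(X=x) > 0 and Q₀(x,y,z) = 0 otherwise (where P(X=x), P(X=x,Y=y), P(X=x,Z=z) are the corresponding marginals of P). Then Q₀ is a joint distribution in Δ_P, and S̃I(X:Y;Z) = 0 if and only if MI_{Q₀}(Y:Z) = 0. -/

import Mathlib

/-!
Write `Q(yz)`, `P(xy)`, … for marginals. For every distribution `Q`,
`CoI_Q = ∑ Q · log (Q(xy) Q(xz) Q(yz) / (Q(x) Q(y) Q(z)) / Q)`  (`coI_eq`).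
If `Q ∈ Δ_P`, then the marginals other than `Q(yz)` are those of `P`, and
`Q₀ = P(xy) P(xz) / P(x)`, so `CoI_Q = ∑ Q · log (R / Q)` with `R = Q₀ · Q(yz) / (P(y) P(z))`.
Two consequences:

* For `Q = Q₀` this reads `CoI_{Q₀} = MI_{Q₀}(Y:Z)` (`coI_condIndep`), because `Q₀` makes `Y` and
  `Z` conditionally independent given `X`.
* From `log t ≤ t - 1` one gets `CoI_Q ≤ ∑ R - 1 = ∑_{y,z} Q(yz) Q₀(yz) / (P(y) P(z)) - 1`
  (`coI_le`). This bounds the co-information uniformly on `Δ_P`. If `Y` and `Z` are independent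
  under `Q₀`, then `Q₀(yz) = P(y) P(z)` and the bound is `0`.

Hence `0 ≤ MI_{Q₀}(Y:Z) = CoI_{Q₀} ≤ S̃I`, which settles one direction. Conversely,
`MI_{Q₀}(Y:Z) = 0` forces independence by the equality case of Gibbs' inequality
(`eq_of_gibbs_eq_zero`), and then `0` is the maximum of the co-information, attained at `Q₀`.
-/

open scoped BigOperators
open Real

namespace PID

variable {𝒳 𝒴 𝒵 : Type*} [Fintype 𝒳] [Fintype 𝒴] [Fintype 𝒵]

/-- A joint distribution on `𝒳 × 𝒴 × 𝒵`: nonnegative values summing to 1. -/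
def IsDist (P : 𝒳 × 𝒴 × 𝒵 → ℝ) : Prop :=
  (∀ p, 0 ≤ P p) ∧ ∑ p, P p = 1

noncomputable def margX (P : 𝒳 × 𝒴 × 𝒵 → ℝ) (x : 𝒳) : ℝ := ∑ y, ∑ z, P (x, y, z)
noncomputable def margY (P : 𝒳 × 𝒴 × 𝒵 → ℝ) (y : 𝒴) : ℝ := ∑ x, ∑ z, P (x, y, z)
noncomputable def margZ (P : 𝒳 × 𝒴 × 𝒵 → ℝ) (z : 𝒵) : ℝ := ∑ x, ∑ y, P (x, y, z)
noncomputable def margXY (P : 𝒳 × 𝒴 × 𝒵 → ℝ) (x : 𝒳) (y : 𝒴) : ℝ := ∑ z, P (x, y, z)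
noncomputable def margXZ (P : 𝒳 × 𝒴 × 𝒵 → ℝ) (x : 𝒳) (z : 𝒵) : ℝ := ∑ y, P (x, y, z)
noncomputable def margYZ (P : 𝒳 × 𝒴 × 𝒵 → ℝ) (y : 𝒴) (z : 𝒵) : ℝ := ∑ x, P (x, y, z)

/-- Mutual information `MI(X:Y)`. -/
noncomputable def miXY (P : 𝒳 × 𝒴 × 𝒵 → ℝ) : ℝ :=
  ∑ x, ∑ y, margXY P x y * Real.log (margXY P x y / (margX P x * margY P y))

/-- Mutual information `MI(X:Z)`. -/
noncomputable def miXZ (P : 𝒳 × 𝒴 × 𝒵 → ℝ) : ℝ :=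
  ∑ x, ∑ z, margXZ P x z * Real.log (margXZ P x z / (margX P x * margZ P z))

/-- Mutual information `MI(Y:Z)`. -/
noncomputable def miYZ (P : 𝒳 × 𝒴 × 𝒵 → ℝ) : ℝ :=
  ∑ y, ∑ z, margYZ P y z * Real.log (margYZ P y z / (margY P y * margZ P z))

/-- Mutual information `MI(X:(Y,Z))`. -/
noncomputable def miXYZ (P : 𝒳 × 𝒴 × 𝒵 → ℝ) : ℝ :=
  ∑ x, ∑ y, ∑ z, P (x, y, z) * Real.log (P (x, y, z) / (margX P x * margYZ P y z))

/-- Conditional mutual information `MI(X:Y|Z)`. -/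
noncomputable def miXY_Z (P : 𝒳 × 𝒴 × 𝒵 → ℝ) : ℝ :=
  ∑ x, ∑ y, ∑ z, P (x, y, z) *
    Real.log (P (x, y, z) * margZ P z / (margXZ P x z * margYZ P y z))

/-- Conditional mutual information `MI(X:Z|Y)`. -/
noncomputable def miXZ_Y (P : 𝒳 × 𝒴 × 𝒵 → ℝ) : ℝ :=
  ∑ x, ∑ y, ∑ z, P (x, y, z) *
    Real.log (P (x, y, z) * margY P y / (margXY P x y * margYZ P y z))

/-- Conditional mutual information `MI(Y:Z|X)`. -/
noncomputable def miYZ_X (P : 𝒳 × 𝒴 × 𝒵 → ℝ) : ℝ :=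
  ∑ x, ∑ y, ∑ z, P (x, y, z) *
    Real.log (P (x, y, z) * margX P x / (margXY P x y * margXZ P x z))

/-- Conditional entropy `H(X|Y,Z)`. -/
noncomputable def hX_YZ (P : 𝒳 × 𝒴 × 𝒵 → ℝ) : ℝ :=
  -∑ x, ∑ y, ∑ z, P (x, y, z) * Real.log (P (x, y, z) / margYZ P y z)

/-- Conditional entropy `H(X|Z)`. -/
noncomputable def hX_Z (P : 𝒳 × 𝒴 × 𝒵 → ℝ) : ℝ :=
  -∑ x, ∑ z, margXZ P x z * Real.log (margXZ P x z / margZ P z)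

/-- Conditional entropy `H(Y|Z)`. -/
noncomputable def hY_Z (P : 𝒳 × 𝒴 × 𝒵 → ℝ) : ℝ :=
  -∑ y, ∑ z, margYZ P y z * Real.log (margYZ P y z / margZ P z)

/-- Conditional entropy `H(Z|Y)`. -/
noncomputable def hZ_Y (P : 𝒳 × 𝒴 × 𝒵 → ℝ) : ℝ :=
  -∑ y, ∑ z, margYZ P y z * Real.log (margYZ P y z / margY P y)

/-- Co-information `CoI(X;Y;Z) = MI(X:Y) − MI(X:Y|Z)`. -/
noncomputable def coI (P : 𝒳 × 𝒴 × 𝒵 → ℝ) : ℝ := miXY P - miXY_Z P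

/-- `Δ_P`: the joint distributions with the same pair marginals as `P` on `(X,Y)` and `(X,Z)`. -/
def ΔP (P : 𝒳 × 𝒴 × 𝒵 → ℝ) : Set (𝒳 × 𝒴 × 𝒵 → ℝ) :=
  {Q | IsDist Q ∧ (∀ x y, margXY Q x y = margXY P x y) ∧ ∀ x z, margXZ Q x z = margXZ P x z}

/-- `ŨI(X:Y∖Z) = min_{Q ∈ Δ_P} MI_Q(X:Y|Z)`. -/
noncomputable def UIY (P : 𝒳 × 𝒴 × 𝒵 → ℝ) : ℝ := sInf (miXY_Z '' ΔP P)

/-- `ŨI(X:Z∖Y) = min_{Q ∈ Δ_P} MI_Q(X:Z|Y)`. -/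
noncomputable def UIZ (P : 𝒳 × 𝒴 × 𝒵 → ℝ) : ℝ := sInf (miXZ_Y '' ΔP P)

/-- `S̃I(X:Y;Z) = max_{Q ∈ Δ_P} CoI_Q(X;Y;Z)`. -/
noncomputable def SI (P : 𝒳 × 𝒴 × 𝒵 → ℝ) : ℝ := sSup (coI '' ΔP P)

/-- `C̃I(X:Y;Z) = MI_P(X:(Y,Z)) − min_{Q ∈ Δ_P} MI_Q(X:(Y,Z))`. -/
noncomputable def CI (P : 𝒳 × 𝒴 × 𝒵 → ℝ) : ℝ := miXYZ P - sInf (miXYZ '' ΔP P)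

set_option linter.unusedSectionVars false

/-! ### Gibbs' inequality -/

/-- Termwise Gibbs inequality. For `b = 0 < a` it fails, as `a / 0 = 0` and `log 0 = 0` make the
right side `0`; hence the hypothesis `h`. -/
lemma sub_le_mul_log {a b : ℝ} (ha : 0 ≤ a) (hb : 0 ≤ b) (h : 0 < a → 0 < b) :
    a - b ≤ a * log (a / b) := by
  rcases ha.eq_or_lt with rfl | ha
  · simpa using hb
  have hb := h ha
  have h1 := log_le_sub_one_of_pos (div_pos hb ha)
  have h2 : log (a / b) = -log (b / a) := by rw [← log_inv, inv_div]
  have h3 : a * (b / a) = b := by field_simp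
  rw [h2]
  nlinarith

lemma eq_of_mul_log_eq {a b : ℝ} (ha : 0 ≤ a) (h : 0 < a → 0 < b)
    (he : a * log (a / b) = a - b) : a = b := by
  rcases ha.eq_or_lt with rfl | ha
  · simp at he; exact he.symm
  have hb := h ha
  by_contra hne
  have h1 := log_lt_sub_one_of_pos (div_pos hb ha)
    (fun h => hne ((div_eq_one_iff_eq ha.ne').1 h).symm)
  have h2 : log (a / b) = -log (b / a) := by rw [← log_inv, inv_div]
  have h3 : a * (b / a) = b := by field_simp
  rw [h2] at he
  nlinarith

lemma gibbs_nonneg {ι : Type*} [Fintype ι] {a b : ι → ℝ} (ha : ∀ i, 0 ≤ a i) (hb : ∀ i, 0 ≤ b i)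
    (h : ∀ i, 0 < a i → 0 < b i) (hs : ∑ i, a i = ∑ i, b i) :
    0 ≤ ∑ i, a i * log (a i / b i) := by
  have := Finset.sum_le_sum fun i (_ : i ∈ Finset.univ) => sub_le_mul_log (ha i) (hb i) (h i)
  rwa [Finset.sum_sub_distrib, hs, sub_self] at this

lemma eq_of_gibbs_eq_zero {ι : Type*} [Fintype ι] {a b : ι → ℝ} (ha : ∀ i, 0 ≤ a i)
    (hb : ∀ i, 0 ≤ b i) (h : ∀ i, 0 < a i → 0 < b i) (hs : ∑ i, a i = ∑ i, b i)
    (h0 : ∑ i, a i * log (a i / b i) = 0) (i : ι) : a i = b i := by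
  have key := (Finset.sum_eq_sum_iff_of_le
    fun i (_ : i ∈ Finset.univ) => sub_le_mul_log (ha i) (hb i) (h i)).1
    (by rw [Finset.sum_sub_distrib, hs, sub_self, h0])
  exact eq_of_mul_log_eq (ha i) (h i) (key i (Finset.mem_univ i)).symm

/-! ### Marginals -/

section Marginals

variable {Q : 𝒳 × 𝒴 × 𝒵 → ℝ}

lemma margX_eq (Q : 𝒳 × 𝒴 × 𝒵 → ℝ) (x : 𝒳) : margX Q x = ∑ z, margXZ Q x z :=
  Finset.sum_comm

lemma margY_eq (Q : 𝒳 × 𝒴 × 𝒵 → ℝ) (y : 𝒴) : margY Q y = ∑ z, margYZ Q y z :=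
  Finset.sum_comm

lemma margZ_eq (Q : 𝒳 × 𝒴 × 𝒵 → ℝ) (z : 𝒵) : margZ Q z = ∑ y, margYZ Q y z :=
  Finset.sum_comm

lemma margXY_nonneg (hQ : ∀ p, 0 ≤ Q p) (x : 𝒳) (y : 𝒴) : 0 ≤ margXY Q x y :=
  Finset.sum_nonneg fun _ _ => hQ _

lemma margXZ_nonneg (hQ : ∀ p, 0 ≤ Q p) (x : 𝒳) (z : 𝒵) : 0 ≤ margXZ Q x z :=
  Finset.sum_nonneg fun _ _ => hQ _

lemma margYZ_nonneg (hQ : ∀ p, 0 ≤ Q p) (y : 𝒴) (z : 𝒵) : 0 ≤ margYZ Q y z :=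
  Finset.sum_nonneg fun _ _ => hQ _

lemma margX_nonneg (hQ : ∀ p, 0 ≤ Q p) (x : 𝒳) : 0 ≤ margX Q x :=
  Finset.sum_nonneg fun _ _ => margXY_nonneg hQ _ _

lemma margY_nonneg (hQ : ∀ p, 0 ≤ Q p) (y : 𝒴) : 0 ≤ margY Q y :=
  Finset.sum_nonneg fun _ _ => margXY_nonneg hQ _ _

lemma margZ_nonneg (hQ : ∀ p, 0 ≤ Q p) (z : 𝒵) : 0 ≤ margZ Q z :=
  Finset.sum_nonneg fun _ _ => margXZ_nonneg hQ _ _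

lemma le_margXY (hQ : ∀ p, 0 ≤ Q p) (x : 𝒳) (y : 𝒴) (z : 𝒵) : Q (x, y, z) ≤ margXY Q x y :=
  Finset.single_le_sum (f := fun z => Q (x, y, z)) (fun _ _ => hQ _) (Finset.mem_univ z)

lemma le_margXZ (hQ : ∀ p, 0 ≤ Q p) (x : 𝒳) (y : 𝒴) (z : 𝒵) : Q (x, y, z) ≤ margXZ Q x z :=
  Finset.single_le_sum (f := fun y => Q (x, y, z)) (fun _ _ => hQ _) (Finset.mem_univ y)

lemma le_margYZ (hQ : ∀ p, 0 ≤ Q p) (x : 𝒳) (y : 𝒴) (z : 𝒵) : Q (x, y, z) ≤ margYZ Q y z :=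
  Finset.single_le_sum (f := fun x => Q (x, y, z)) (fun _ _ => hQ _) (Finset.mem_univ x)

lemma margXY_le_margX (hQ : ∀ p, 0 ≤ Q p) (x : 𝒳) (y : 𝒴) : margXY Q x y ≤ margX Q x :=
  Finset.single_le_sum (f := fun y => margXY Q x y) (fun _ _ => margXY_nonneg hQ _ _)
    (Finset.mem_univ y)

lemma margXZ_le_margX (hQ : ∀ p, 0 ≤ Q p) (x : 𝒳) (z : 𝒵) : margXZ Q x z ≤ margX Q x :=
  margX_eq Q x ▸ Finset.single_le_sum (f := fun z => margXZ Q x z)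
    (fun _ _ => margXZ_nonneg hQ _ _) (Finset.mem_univ z)

lemma margYZ_le_margY (hQ : ∀ p, 0 ≤ Q p) (y : 𝒴) (z : 𝒵) : margYZ Q y z ≤ margY Q y :=
  margY_eq Q y ▸ Finset.single_le_sum (f := fun z => margYZ Q y z)
    (fun _ _ => margYZ_nonneg hQ _ _) (Finset.mem_univ z)

lemma margYZ_le_margZ (hQ : ∀ p, 0 ≤ Q p) (y : 𝒴) (z : 𝒵) : margYZ Q y z ≤ margZ Q z :=
  margZ_eq Q z ▸ Finset.single_le_sum (f := fun y => margYZ Q y z)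
    (fun _ _ => margYZ_nonneg hQ _ _) (Finset.mem_univ y)

lemma sum_eq_sum_margXY (Q : 𝒳 × 𝒴 × 𝒵 → ℝ) : ∑ p, Q p = ∑ x, ∑ y, margXY Q x y := by
  simp only [Fintype.sum_prod_type, margXY]

lemma sum_margY (hQ : IsDist Q) : ∑ y, margY Q y = 1 := by
  rw [← hQ.2, sum_eq_sum_margXY, Finset.sum_comm]; rfl

lemma sum_margZ (hQ : IsDist Q) : ∑ z, margZ Q z = 1 := by
  rw [← hQ.2, sum_eq_sum_margXY]
  calc ∑ z, margZ Q z = ∑ x, ∑ z, margXZ Q x z := Finset.sum_comm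
    _ = ∑ x, margX Q x := by simp only [margX_eq]
    _ = _ := rfl

lemma margYZ_le_one (hQ : IsDist Q) (y : 𝒴) (z : 𝒵) : margYZ Q y z ≤ 1 :=
  (margYZ_le_margY hQ.1 y z).trans (sum_margY hQ ▸
    Finset.single_le_sum (f := fun y => margY Q y) (fun _ _ => margY_nonneg hQ.1 _)
      (Finset.mem_univ y))

/-- Moves the `X`-sum inside, where it acts on `Q` alone. -/
lemma sum_mul_eq_sum_margYZ (Q : 𝒳 × 𝒴 × 𝒵 → ℝ) (f : 𝒴 → 𝒵 → ℝ) :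
    ∑ x, ∑ y, ∑ z, Q (x, y, z) * f y z = ∑ y, ∑ z, margYZ Q y z * f y z := by
  rw [Finset.sum_comm]
  refine Finset.sum_congr rfl fun y _ => ?_
  rw [Finset.sum_comm]
  simp only [margYZ, Finset.sum_mul]

end Marginals

/-! ### Mutual information and co-information -/

lemma mi_sum_eq {Q : 𝒳 × 𝒴 × 𝒵 → ℝ} (hQ : IsDist Q) :
    ∑ i : 𝒴 × 𝒵, margYZ Q i.1 i.2 = ∑ i : 𝒴 × 𝒵, margY Q i.1 * margZ Q i.2 := by
  simp only [Fintype.sum_prod_type, ← margY_eq, ← Finset.mul_sum, sum_margZ hQ, mul_one]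

lemma mi_abs_cont {Q : 𝒳 × 𝒴 × 𝒵 → ℝ} (hQ : IsDist Q) (i : 𝒴 × 𝒵) (h : 0 < margYZ Q i.1 i.2) :
    0 < margY Q i.1 * margZ Q i.2 :=
  mul_pos (h.trans_le (margYZ_le_margY hQ.1 _ _)) (h.trans_le (margYZ_le_margZ hQ.1 _ _))

lemma miYZ_nonneg {Q : 𝒳 × 𝒴 × 𝒵 → ℝ} (hQ : IsDist Q) : 0 ≤ miYZ Q := by
  have := gibbs_nonneg (fun i : 𝒴 × 𝒵 => margYZ_nonneg hQ.1 i.1 i.2)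
    (fun i => mul_nonneg (margY_nonneg hQ.1 i.1) (margZ_nonneg hQ.1 i.2))
    (mi_abs_cont hQ) (mi_sum_eq hQ)
  rwa [Fintype.sum_prod_type] at this

lemma indep_of_miYZ_eq_zero {Q : 𝒳 × 𝒴 × 𝒵 → ℝ} (hQ : IsDist Q) (h : miYZ Q = 0) (y : 𝒴) (z : 𝒵) :
    margYZ Q y z = margY Q y * margZ Q z :=
  eq_of_gibbs_eq_zero (fun i : 𝒴 × 𝒵 => margYZ_nonneg hQ.1 i.1 i.2)
    (fun i => mul_nonneg (margY_nonneg hQ.1 i.1) (margZ_nonneg hQ.1 i.2))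
    (mi_abs_cont hQ) (mi_sum_eq hQ) (by rw [Fintype.sum_prod_type]; exact h) (y, z)

/-- Symmetric form of the co-information, as minus a sum of relative-entropy
type, so that `sub_le_mul_log` applies to each term. -/
lemma coI_eq {Q : 𝒳 × 𝒴 × 𝒵 → ℝ} (hQ : ∀ p, 0 ≤ Q p) :
    coI Q = -∑ x, ∑ y, ∑ z, Q (x, y, z) * log (Q (x, y, z) /
      (margXY Q x y * margXZ Q x z / margX Q x * (margYZ Q y z / (margY Q y * margZ Q z)))) := by
  have h1 : miXY Q = ∑ x, ∑ y, ∑ z, Q (x, y, z) *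
      log (margXY Q x y / (margX Q x * margY Q y)) := by
    simp only [miXY, ← Finset.sum_mul]
    rfl
  rw [coI, h1, miXY_Z]
  simp only [← Finset.sum_sub_distrib, ← Finset.sum_neg_distrib]
  refine Finset.sum_congr rfl fun x _ => Finset.sum_congr rfl fun y _ =>
    Finset.sum_congr rfl fun z _ => ?_
  rcases (hQ (x, y, z)).eq_or_lt with h0 | h0
  · simp [← h0]
  have hxy := h0.trans_le (le_margXY hQ x y z)
  have hxz := h0.trans_le (le_margXZ hQ x y z)
  have hyz := h0.trans_le (le_margYZ hQ x y z)
  have hx := hxy.trans_le (margXY_le_margX hQ x y)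
  have hy := hyz.trans_le (margYZ_le_margY hQ y z)
  have hz := hyz.trans_le (margYZ_le_margZ hQ y z)
  rw [← mul_sub, ← log_div (by positivity) (by positivity), ← mul_neg, ← log_inv]
  congr 2
  field_simp

section CondIndep

variable {P Q₀ : 𝒳 × 𝒴 × 𝒵 → ℝ}

/-- The distribution with `Y` and `Z` conditionally independent given `X` lies in `Δ_P`. The
formula for `Q₀` needs no case split, as division by `0` gives `0`. -/
lemma condIndep_mem (hP : IsDist P)
    (hQ₀ : ∀ x y z, Q₀ (x, y, z) = margXY P x y * margXZ P x z / margX P x) : Q₀ ∈ ΔP P := by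
  have hXY : ∀ x y, margXY Q₀ x y = margXY P x y := fun x y => by
    have h : margXY Q₀ x y = margXY P x y * margX P x / margX P x := by
      simp only [margXY, hQ₀, margX_eq, Finset.mul_sum, Finset.sum_div]
    rw [h]
    refine mul_div_cancel_of_imp fun h0 => le_antisymm ?_ (margXY_nonneg hP.1 x y)
    exact (margXY_le_margX hP.1 x y).trans h0.le
  have hXZ : ∀ x z, margXZ Q₀ x z = margXZ P x z := fun x z => by
    have h : margXZ Q₀ x z = margX P x * margXZ P x z / margX P x := by
      change ∑ y, Q₀ (x, y, z) = (∑ y, margXY P x y) * margXZ P x z / margX P x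
      simp only [hQ₀, Finset.sum_mul, Finset.sum_div]
    rw [h, mul_comm]
    refine mul_div_cancel_of_imp fun h0 => le_antisymm ?_ (margXZ_nonneg hP.1 x z)
    exact (margXZ_le_margX hP.1 x z).trans h0.le
  refine ⟨⟨fun ⟨x, y, z⟩ => ?_, ?_⟩, hXY, hXZ⟩
  · rw [hQ₀]
    exact div_nonneg (mul_nonneg (margXY_nonneg hP.1 _ _) (margXZ_nonneg hP.1 _ _))
      (margX_nonneg hP.1 _)
  · rw [sum_eq_sum_margXY, ← hP.2, sum_eq_sum_margXY]
    simp only [hXY]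

lemma margX_of_mem {Q : 𝒳 × 𝒴 × 𝒵 → ℝ} (hQ : Q ∈ ΔP P) (x : 𝒳) : margX Q x = margX P x :=
  Finset.sum_congr rfl fun y _ => hQ.2.1 x y

lemma margY_of_mem {Q : 𝒳 × 𝒴 × 𝒵 → ℝ} (hQ : Q ∈ ΔP P) (y : 𝒴) : margY Q y = margY P y :=
  Finset.sum_congr rfl fun x _ => hQ.2.1 x y

lemma margZ_of_mem {Q : 𝒳 × 𝒴 × 𝒵 → ℝ} (hQ : Q ∈ ΔP P) (z : 𝒵) : margZ Q z = margZ P z :=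
  Finset.sum_congr rfl fun x _ => hQ.2.2 x z

lemma coI_eq_of_mem (hQ₀ : ∀ x y z, Q₀ (x, y, z) = margXY P x y * margXZ P x z / margX P x)
    {Q : 𝒳 × 𝒴 × 𝒵 → ℝ} (hQ : Q ∈ ΔP P) :
    coI Q = -∑ x, ∑ y, ∑ z, Q (x, y, z) * log (Q (x, y, z) /
      (Q₀ (x, y, z) * (margYZ Q y z / (margY P y * margZ P z)))) := by
  simp only [coI_eq hQ.1.1, hQ₀, hQ.2.1, hQ.2.2, margX_of_mem hQ, margY_of_mem hQ,
    margZ_of_mem hQ]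

lemma coI_condIndep (hP : IsDist P)
    (hQ₀ : ∀ x y z, Q₀ (x, y, z) = margXY P x y * margXZ P x z / margX P x) :
    coI Q₀ = miYZ Q₀ := by
  have hm := condIndep_mem hP hQ₀
  rw [coI_eq_of_mem hQ₀ hm, miYZ,
    ← sum_mul_eq_sum_margYZ Q₀ (fun y z => log (margYZ Q₀ y z / (margY Q₀ y * margZ Q₀ z)))]
  simp only [← Finset.sum_neg_distrib]
  refine Finset.sum_congr rfl fun x _ => Finset.sum_congr rfl fun y _ =>
    Finset.sum_congr rfl fun z _ => ?_
  by_cases h0 : Q₀ (x, y, z) = 0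
  · simp [h0]
  rw [← mul_neg, ← log_inv, margY_of_mem hm, margZ_of_mem hm, inv_div, mul_div_cancel_left₀ _ h0]

lemma coI_le (hP : IsDist P)
    (hQ₀ : ∀ x y z, Q₀ (x, y, z) = margXY P x y * margXZ P x z / margX P x)
    {Q : 𝒳 × 𝒴 × 𝒵 → ℝ} (hQ : Q ∈ ΔP P) :
    coI Q ≤ ∑ y, ∑ z, margYZ Q₀ y z * (margYZ Q y z / (margY P y * margZ P z)) - 1 := by
  have hm := condIndep_mem hP hQ₀
  have hs : ∑ x, ∑ y, ∑ z, Q (x, y, z) = 1 := by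
    simpa only [Fintype.sum_prod_type] using hQ.1.2
  rw [coI_eq_of_mem hQ₀ hQ, ← sum_mul_eq_sum_margYZ Q₀, ← hs, neg_le, neg_sub]
  simp only [← Finset.sum_sub_distrib]
  refine Finset.sum_le_sum fun x _ => Finset.sum_le_sum fun y _ => Finset.sum_le_sum fun z _ => ?_
  refine sub_le_mul_log (hQ.1.1 _) (mul_nonneg (hm.1.1 _) (div_nonneg (margYZ_nonneg hQ.1.1 _ _)
    (mul_nonneg (margY_nonneg hP.1 _) (margZ_nonneg hP.1 _)))) fun h0 => ?_
  -- `Q` is absolutely continuous with respect to `Q₀`, as the pair marginals agree.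
  have hxy := h0.trans_le (le_margXY hQ.1.1 x y z)
  have hxz := h0.trans_le (le_margXZ hQ.1.1 x y z)
  have hyz := h0.trans_le (le_margYZ hQ.1.1 x y z)
  have hx := hxy.trans_le (margXY_le_margX hQ.1.1 x y)
  have hy := hyz.trans_le (margYZ_le_margY hQ.1.1 y z)
  have hz := hyz.trans_le (margYZ_le_margZ hQ.1.1 y z)
  rw [hQ.2.1] at hxy
  rw [hQ.2.2] at hxz
  rw [margX_of_mem hQ] at hx
  rw [margY_of_mem hQ] at hy
  rw [margZ_of_mem hQ] at hz
  rw [hQ₀]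
  positivity

lemma bddAbove_coI (hP : IsDist P)
    (hQ₀ : ∀ x y z, Q₀ (x, y, z) = margXY P x y * margXZ P x z / margX P x) :
    BddAbove (coI '' ΔP P) := by
  have hm := condIndep_mem hP hQ₀
  refine ⟨∑ y, ∑ z, margYZ Q₀ y z * (1 / (margY P y * margZ P z)) - 1, ?_⟩
  rintro _ ⟨Q, hQ, rfl⟩
  refine (coI_le hP hQ₀ hQ).trans (sub_le_sub_right ?_ 1)
  refine Finset.sum_le_sum fun y _ => Finset.sum_le_sum fun z _ => ?_
  exact mul_le_mul_of_nonneg_left (div_le_div_of_nonneg_right (margYZ_le_one hQ.1 y z)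
    (mul_nonneg (margY_nonneg hP.1 _) (margZ_nonneg hP.1 _))) (margYZ_nonneg hm.1.1 _ _)

lemma coI_nonpos_of_indep (hP : IsDist P)
    (hQ₀ : ∀ x y z, Q₀ (x, y, z) = margXY P x y * margXZ P x z / margX P x)
    (hI : ∀ y z, margYZ Q₀ y z = margY P y * margZ P z)
    {Q : 𝒳 × 𝒴 × 𝒵 → ℝ} (hQ : Q ∈ ΔP P) : coI Q ≤ 0 := by
  refine (coI_le hP hQ₀ hQ).trans (sub_nonpos.2 ?_)
  calc ∑ y, ∑ z, margYZ Q₀ y z * (margYZ Q y z / (margY P y * margZ P z))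
      ≤ ∑ y, ∑ z, margYZ Q y z := by
        refine Finset.sum_le_sum fun y _ => Finset.sum_le_sum fun z _ => ?_
        rw [hI]
        by_cases h0 : margY P y * margZ P z = 0
        · simpa [h0] using margYZ_nonneg hQ.1.1 y z
        · rw [mul_div_cancel₀ _ h0]
    _ = 1 := by simp only [← margY_eq, sum_margY hQ.1]

end CondIndep

/-- with `Q₀` the distribution making `Y` and `Z` conditionally independent
given `X` (with the pair marginals of `P`), one has `Q₀ ∈ Δ_P`, and `S̃I(X:Y;Z) = 0` iff
`MI_{Q₀}(Y:Z) = 0`. -/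
theorem stmt7 [Nonempty 𝒳] [Nonempty 𝒴] [Nonempty 𝒵]
    (P Q₀ : 𝒳 × 𝒴 × 𝒵 → ℝ) (hP : IsDist P)
    (hQ₀ : ∀ x y z, Q₀ (x, y, z) =
      if 0 < margX P x then margXY P x y * margXZ P x z / margX P x else 0) :
    Q₀ ∈ ΔP P ∧ (SI P = 0 ↔ miYZ Q₀ = 0) := by
  have h : ∀ x y z, Q₀ (x, y, z) = margXY P x y * margXZ P x z / margX P x := fun x y z => by
    rw [hQ₀]
    split_ifs with hx
    · rfl
    · rw [le_antisymm (not_lt.1 hx) (margX_nonneg hP.1 x), div_zero]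
  have hm := condIndep_mem hP h
  have hle : miYZ Q₀ ≤ SI P :=
    coI_condIndep hP h ▸ le_csSup (bddAbove_coI hP h) (Set.mem_image_of_mem _ hm)
  refine ⟨hm, fun h0 => le_antisymm (h0 ▸ hle) (miYZ_nonneg hm.1), fun h0 => ?_⟩
  refine le_antisymm (csSup_le ⟨_, Set.mem_image_of_mem _ hm⟩ ?_) (h0 ▸ hle)
  rintro _ ⟨Q, hQ, rfl⟩
  refine coI_nonpos_of_indep hP h (fun y z => ?_) hQ
  rw [indep_of_miYZ_eq_zero hm.1 h0, margY_of_mem hm, margZ_of_mem hm]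

end PID
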